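/- Let ν > 0 and let Φ₋, Φ, Φ₊ : ℝ → ℝ with Φ twice differentiable and Φ₋, Φ₊ differentiable on (0,∞), satisfying for all x > 0: Φ₋'(x) = −xΦ(x)/(2ν), Φ'(x) = −xΦ₊(x)/(2(ν+1)), Φ'(x) = (2ν/x)(Φ₋(x) − Φ(x)), and Φ₊'(x) = (2(ν+1)/x)(Φ(x) − Φ₊(x)). Define Θ(x) = Φ(x)² − Φ₋(x)Φ₊(x). If x₀ > 0 and Φ(x₀) = 0, then the second derivative of x ↦ x^(2ν+2)Θ(x) at x₀ equals −(2/ν)·x₀^(2ν+2)·Φ'(x₀)², which is strictly negative when Φ'(x₀) ≠ 0. -/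

import Mathlib

/-!
Write `Θ` for the Turánian. The relations for `Φ₋'`, `Φ'` and `Φ₊'`, combined with the three-term
recurrence that comes from equating the two expressions for `Φ'`, give
`Θ' + (2ν+2)Θ/x = xΦΦ₊/(ν(ν+1))`. Since `x^(2ν+2)` is an integrating factor for the left-hand side,
`(x^(2ν+2)Θ)' = x^(2ν+2) · xΦΦ₊/(ν(ν+1))`. At a zero of `Φ` only the term containing `Φ'` survives
in the derivative of this product, and there `Φ₊` is again a multiple of `Φ'`.
-/

open Filter Topology

/-- The derivative relations at the point `x` between the normalized cylinder functions
`Φm`, `Φ`, `Φp` of the orders `ν - 1`, `ν`, `ν + 1`. -/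
structure CylinderRelationsAt (ν : ℝ) (Φm Φ Φp : ℝ → ℝ) (x : ℝ) : Prop where
  hasDerivAt_pred : HasDerivAt Φm (-(x * Φ x) / (2 * ν)) x
  hasDerivAt_raise : HasDerivAt Φ (-(x * Φp x) / (2 * (ν + 1))) x
  hasDerivAt_lower : HasDerivAt Φ ((2 * ν / x) * (Φm x - Φ x)) x
  hasDerivAt_succ : HasDerivAt Φp ((2 * (ν + 1) / x) * (Φ x - Φp x)) x

/-- The Turánian `Φ² - Φm Φp` of three consecutive members `Φm`, `Φ`, `Φp` of a family of
functions. -/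
def turanian (Φm Φ Φp : ℝ → ℝ) (x : ℝ) : ℝ :=
  Φ x ^ 2 - Φm x * Φp x

theorem hasDerivAt_rpow_mul {f : ℝ → ℝ} {f' x : ℝ} (a : ℝ) (hf : HasDerivAt f f' x) (hx : x ≠ 0) :
    HasDerivAt (fun y => y ^ a * f y) (x ^ a * (f' + a * f x / x)) x := by
  refine ((Real.hasDerivAt_rpow_const (Or.inl hx)).fun_mul hf).congr_deriv ?_
  rw [Real.rpow_sub_one hx]
  ring

namespace CylinderRelationsAt

variable {ν x : ℝ} {Φm Φ Φp : ℝ → ℝ}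

theorem recurrence (h : CylinderRelationsAt ν Φm Φ Φp x) (hν1 : ν + 1 ≠ 0) (hx : x ≠ 0) :
    4 * ν * (ν + 1) * (Φ x - Φm x) = x ^ 2 * Φp x := by
  have hderiv : -(x * Φp x) / (2 * (ν + 1)) = (2 * ν / x) * (Φm x - Φ x) :=
    h.hasDerivAt_raise.unique h.hasDerivAt_lower
  field_simp at hderiv
  linear_combination hderiv

theorem hasDerivAt_turanian (h : CylinderRelationsAt ν Φm Φ Φp x) (hν : ν ≠ 0) (hν1 : ν + 1 ≠ 0)
    (hx : x ≠ 0) :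
    HasDerivAt (turanian Φm Φ Φp)
      (x * (Φ x * Φp x) / (ν * (ν + 1)) - (2 * ν + 2) * turanian Φm Φ Φp x / x) x := by
  refine ((h.hasDerivAt_raise.fun_pow 2).fun_sub
    (h.hasDerivAt_pred.fun_mul h.hasDerivAt_succ)).congr_deriv ?_
  have hrec := h.recurrence hν1 hx
  unfold turanian
  field_simp
  linear_combination (ν + 1) * Φ x * hrec

theorem hasDerivAt_weighted_turanian (h : CylinderRelationsAt ν Φm Φ Φp x) (hν : ν ≠ 0)
    (hν1 : ν + 1 ≠ 0) (hx : x ≠ 0) :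
    HasDerivAt (fun y => y ^ (2 * ν + 2) * turanian Φm Φ Φp y)
      (x ^ (2 * ν + 2) * (x * (Φ x * Φp x) / (ν * (ν + 1)))) x := by
  simpa only [sub_add_cancel] using
    hasDerivAt_rpow_mul (2 * ν + 2) (h.hasDerivAt_turanian hν hν1 hx) hx

end CylinderRelationsAt

theorem weighted_turanian_max_general {ν x₀ : ℝ} {Φm Φ Φp : ℝ → ℝ} (hν : ν ≠ 0) (hν1 : ν + 1 ≠ 0)
    (hx₀ : x₀ ≠ 0) (h : ∀ᶠ x in 𝓝 x₀, CylinderRelationsAt ν Φm Φ Φp x) (hΦ0 : Φ x₀ = 0) :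
    HasDerivAt (deriv fun x => x ^ (2 * ν + 2) * turanian Φm Φ Φp x)
      (-(2 / ν) * x₀ ^ (2 * ν + 2) * deriv Φ x₀ ^ 2) x₀ := by
  have h₀ := h.self_of_nhds
  have hfirst : deriv (fun x => x ^ (2 * ν + 2) * turanian Φm Φ Φp x) =ᶠ[𝓝 x₀]
      fun x => x ^ (2 * ν + 2) * (x * (Φ x * Φp x) / (ν * (ν + 1))) := by
    filter_upwards [h, eventually_ne_nhds hx₀] with x hrel hx
    exact (hrel.hasDerivAt_weighted_turanian hν hν1 hx).deriv
  have hproduct := hasDerivAt_rpow_mul (2 * ν + 2) (((hasDerivAt_id' x₀).fun_mul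
    (h₀.hasDerivAt_raise.fun_mul h₀.hasDerivAt_succ)).div_const (ν * (ν + 1))) hx₀
  refine (hproduct.congr_of_eventuallyEq hfirst).congr_deriv ?_
  rw [h₀.hasDerivAt_raise.deriv, hΦ0]
  field_simp
  ring

/-- If the normalized cylinder functions `Φ₋, Φ, Φ₊` satisfy the derivative
relations, `Φ` is twice differentiable on `(0,∞)`, `x₀ > 0` and `Φ(x₀) = 0`,
then the second derivative of `x ↦ x^(2ν+2)Θ(x)` at `x₀`, where
`Θ(x) = Φ(x)² − Φ₋(x)Φ₊(x)`, equals `−(2/ν)·x₀^(2ν+2)·Φ'(x₀)²`, which is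
strictly negative when `Φ'(x₀) ≠ 0`. -/
theorem weighted_turanian_max (ν : ℝ) (hν : 0 < ν) (Φm Φ Φp : ℝ → ℝ)
    (hΦ2 : ∀ x, 0 < x → DifferentiableAt ℝ (deriv Φ) x)
    (hΦm : ∀ x, 0 < x → HasDerivAt Φm (-(x * Φ x) / (2 * ν)) x)
    (hΦ : ∀ x, 0 < x → HasDerivAt Φ (-(x * Φp x) / (2 * (ν + 1))) x)
    (hΦ' : ∀ x, 0 < x → deriv Φ x = (2 * ν / x) * (Φm x - Φ x))
    (hΦp : ∀ x, 0 < x → HasDerivAt Φp ((2 * (ν + 1) / x) * (Φ x - Φp x)) x)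
    (x₀ : ℝ) (hx₀ : 0 < x₀) (hΦ0 : Φ x₀ = 0) :
    deriv (deriv (fun x => x ^ (2 * ν + 2) * (Φ x ^ 2 - Φm x * Φp x))) x₀ =
      -(2 / ν) * x₀ ^ (2 * ν + 2) * (deriv Φ x₀) ^ 2 ∧
    (deriv Φ x₀ ≠ 0 →
      deriv (deriv (fun x => x ^ (2 * ν + 2) * (Φ x ^ 2 - Φm x * Φp x))) x₀ < 0) := by
  have hrel : ∀ᶠ x in 𝓝 x₀, CylinderRelationsAt ν Φm Φ Φp x := by
    filter_upwards [lt_mem_nhds hx₀] with x hx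
    exact ⟨hΦm x hx, hΦ x hx, hΦ' x hx ▸ (hΦ x hx).differentiableAt.hasDerivAt, hΦp x hx⟩
  have hsecond : deriv (deriv (fun x => x ^ (2 * ν + 2) * (Φ x ^ 2 - Φm x * Φp x))) x₀ =
      -(2 / ν) * x₀ ^ (2 * ν + 2) * (deriv Φ x₀) ^ 2 :=
    (weighted_turanian_max_general hν.ne' (by positivity) hx₀.ne' hrel hΦ0).deriv
  refine ⟨hsecond, fun hd => ?_⟩
  rw [hsecond, neg_mul, neg_mul, neg_lt_zero]
  positivity
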